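/- arXiv:quant-ph/0405184 — 7 statements merged into one kernel-verified Lean document; each statement's English description precedes it below -/
import Mathlib

section
/- Let (X,d) be a metric space, y ∈ X, and let ν be a Borel probability measure on X. Then the distance between the point measure δ_y and ν satisfies d(δ_y, ν) = ∫ d(x,y) dν(x), as an equality of extended nonnegative reals (both sides may be +∞). -/
/-! Since `|f y - f x| ≤ d(x, y)` for every `f` in the Lipschitz ball, integrating gives `≤`. The
function `d(·, y)` would attain the bound, but it may be unbounded; its truncations
`min (d(·, y)) n` lie in the ball, vanish at `y`, and have integrals increasing to `∫ d(x, y) dν(x)`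
by monotone convergence. For a finite measure `ν` the argument compares `ν` with the point mass at
`y` of equal total mass, against which `f` integrates to `ν(X) f(y)`. -/

open MeasureTheory
open scoped ENNReal

/-- The Lipschitz ball of a metric space: bounded functions with Lipschitz constant 1. -/
def LipschitzBall (X : Type*) [MetricSpace X] : Set (X → ℝ) :=
  {f | (∃ C, ∀ z, |f z| ≤ C) ∧ ∀ z w, |f z - f w| ≤ dist z w}

theorem enorm_integral_sub_le_of_lipschitzWith {X E : Type*} [PseudoEMetricSpace X]
    [MeasurableSpace X] [NormedAddCommGroup E] [NormedSpace ℝ E] {K : NNReal} {f : X → E}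
    (hf : LipschitzWith K f) (y : X) (ν : Measure X) :
    ‖∫ x, (f y - f x) ∂ν‖ₑ ≤ K * ∫⁻ x, edist x y ∂ν :=
  calc ‖∫ x, (f y - f x) ∂ν‖ₑ ≤ ∫⁻ x, ‖f y - f x‖ₑ ∂ν := enorm_integral_le_lintegral_enorm _
    _ ≤ ∫⁻ x, K * edist x y ∂ν := lintegral_mono fun x => by
      rw [← edist_eq_enorm_sub, edist_comm x y]
      exact hf y x
    _ = K * ∫⁻ x, edist x y ∂ν := lintegral_const_mul' _ _ ENNReal.coe_ne_top

theorem lintegral_eq_iSup_lintegral_min_natCast {X : Type*} [MeasurableSpace X] {g : X → ℝ≥0∞}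
    {ν : Measure X} (hg : AEMeasurable g ν) :
    ∫⁻ x, g x ∂ν = ⨆ n : ℕ, ∫⁻ x, min (g x) n ∂ν := by
  have iSup_min (a : ℝ≥0∞) : ⨆ n : ℕ, min a n = a := by
    rw [← inf_iSup_eq, ENNReal.iSup_natCast, inf_top_eq]
  have monotone_min (a : ℝ≥0∞) : Monotone fun n : ℕ => min a n := fun m n hmn =>
    min_le_min_left a (Nat.cast_le.2 hmn)
  rw [← lintegral_iSup' (fun n => hg.min aemeasurable_const) (.of_forall fun _ => monotone_min _)]
  simp only [iSup_min]

namespace LipschitzBall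

variable {X : Type*} [MetricSpace X]

theorem lipschitzWith {f : X → ℝ} (hf : f ∈ LipschitzBall X) : LipschitzWith 1 f :=
  LipschitzWith.mk_one hf.2

theorem min_dist_mem (y : X) {r : ℝ} (hr : 0 ≤ r) :
    (fun x => min (dist x y) r) ∈ LipschitzBall X := by
  refine ⟨⟨r, fun x => ?_⟩, fun x z => ?_⟩
  · rw [abs_of_nonneg (le_min dist_nonneg hr)]
    exact min_le_right _ _
  · simpa [Real.dist_eq] using ((LipschitzWith.dist_left y).min_const r).dist_le_mul x z

variable [MeasurableSpace X] [OpensMeasurableSpace X] (ν : Measure X) [IsFiniteMeasure ν]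

theorem integrable {f : X → ℝ} (hf : f ∈ LipschitzBall X) : Integrable f ν := by
  obtain ⟨C, hC⟩ := hf.1
  exact .of_bound (lipschitzWith hf).continuous.measurable.aestronglyMeasurable C (.of_forall hC)

theorem ofReal_abs_sub_integral_le {f : X → ℝ} (hf : f ∈ LipschitzBall X) (y : X) :
    ENNReal.ofReal |ν.real Set.univ * f y - ∫ x, f x ∂ν|
      ≤ ∫⁻ x, ENNReal.ofReal (dist x y) ∂ν := by
  have sub_integral : ν.real Set.univ * f y - ∫ x, f x ∂ν = ∫ x, (f y - f x) ∂ν := by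
    rw [integral_sub (integrable_const _) (integrable ν hf), integral_const, smul_eq_mul]
  rw [sub_integral, ← Real.enorm_eq_ofReal_abs]
  simpa [edist_dist] using enorm_integral_sub_le_of_lipschitzWith (lipschitzWith hf) y ν

theorem ofReal_abs_sub_integral_of_eq_zero {f : X → ℝ} (hf : f ∈ LipschitzBall X)
    (hf_nonneg : 0 ≤ f) {y : X} (hy : f y = 0) :
    ENNReal.ofReal |ν.real Set.univ * f y - ∫ x, f x ∂ν| = ∫⁻ x, ENNReal.ofReal (f x) ∂ν := by
  rw [hy, mul_zero, zero_sub, abs_neg, abs_of_nonneg (integral_nonneg hf_nonneg)]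
  exact ofReal_integral_eq_lintegral_ofReal (integrable ν hf) (.of_forall hf_nonneg)

end LipschitzBall

theorem dist_dirac_measure_general {X : Type*} [MetricSpace X] [MeasurableSpace X]
    [OpensMeasurableSpace X] (y : X) (ν : Measure X) [IsFiniteMeasure ν] :
    (⨆ f : LipschitzBall X, ENNReal.ofReal |ν.real Set.univ * f.1 y - ∫ x, f.1 x ∂ν|)
      = ∫⁻ x, ENNReal.ofReal (dist x y) ∂ν := by
  apply le_antisymm
  · exact iSup_le fun f => LipschitzBall.ofReal_abs_sub_integral_le ν f.2 y
  · have measurable_dist : Measurable fun x => ENNReal.ofReal (dist x y) := by fun_prop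
    rw [lintegral_eq_iSup_lintegral_min_natCast measurable_dist.aemeasurable]
    refine iSup_le fun n => ?_
    have min_dist_mem := LipschitzBall.min_dist_mem y n.cast_nonneg
    refine le_iSup_of_le ⟨_, min_dist_mem⟩ ?_
    rw [LipschitzBall.ofReal_abs_sub_integral_of_eq_zero ν min_dist_mem
      (fun x => le_min dist_nonneg n.cast_nonneg) (by simp)]
    simp only [ENNReal.ofReal_min, ENNReal.ofReal_natCast, le_refl]

/-- For a point measure `δ_y` and a Borel probability measure `ν`,
`d(δ_y, ν) = ∫ d(x,y) dν(x)` as extended nonnegative reals. -/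
theorem dist_dirac_measure {X : Type*} [MetricSpace X] [MeasurableSpace X] [BorelSpace X]
    (y : X) (ν : Measure X) [IsProbabilityMeasure ν] :
    (⨆ f : LipschitzBall X, ENNReal.ofReal |f.1 y - ∫ x, f.1 x ∂ν|)
      = ∫⁻ x, ENNReal.ofReal (dist x y) ∂ν := by
  simpa only [probReal_univ, one_mul] using dist_dirac_measure_general y ν
end

section
/- Let μ₁ and μ₂ be Borel probability measures on ℝ (with the standard metric |x − y|), and let F_i(t) = μ_i((−∞, t]) denote their cumulative distribution functions. Then d(μ₁, μ₂) = ∫_{−∞}^{∞} |F₁(x) − F₂(x)| dx, as an equality of extended nonnegative reals (both sides may be +∞). -/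
open MeasureTheory Set
open scoped ENNReal

/-!
For an integrable `g`, the tail integral `x ↦ ∫ t in Ici x, g t` has `μ`-mean `∫ F(t) g(t) dt` by
Fubini, since `t ∈ Ici x` means `x ∈ Iic t`. With `g` equal to the sign of `F₁ - F₂` on a set of
finite length, the tail integral lies in the Lipschitz ball and separates the measures by the
integral of `|F₁ - F₂|` over that set. Conversely, a Lipschitz `f` clamped to `[a, b]` is `f b`
minus the tail integral of its derivative on `(a, b]`, so for measures of equal mass it separates
them by at most `∫ |f'| |F₁ - F₂|`; let `[a, b]` grow to the line. If the masses differ, `F₁ - F₂`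
has a nonzero limit at `+∞`, so `∫ |F₁ - F₂|` is infinite and the upper bound is trivial.
-/

open Filter
open scoped NNReal Topology

section TailIntegral

variable {α E : Type*} [MeasurableSpace α] [LinearOrder α] [TopologicalSpace α]
  [OrderClosedTopology α] [BorelSpace α] [NormedAddCommGroup E] {ν : Measure α} {g : α → E}

lemma measurable_measureReal_Iic (μ : Measure α) [IsFiniteMeasure μ] :
    Measurable fun t ↦ μ.real (Iic t) :=
  Monotone.measurable fun _ _ h ↦ measureReal_mono (Iic_subset_Iic.2 h)

lemma integrable_prod_indicator_Ici [SecondCountableTopology α] [SFinite ν] (μ : Measure α)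
    [IsFiniteMeasure μ] (hg : Integrable g ν) :
    Integrable (fun p : α × α ↦ (Ici p.1).indicator g p.2) (μ.prod ν) :=
  (hg.comp_snd μ).indicator measurableSet_le'

variable [NormedSpace ℝ E]

lemma integrable_measureReal_Iic_smul (μ : Measure α) [IsFiniteMeasure μ] (hg : Integrable g ν) :
    Integrable (fun t ↦ μ.real (Iic t) • g t) ν := by
  refine hg.bdd_smul (μ.real univ) (measurable_measureReal_Iic μ).aestronglyMeasurable
    (ae_of_all _ fun t ↦ ?_)
  rw [Real.norm_of_nonneg measureReal_nonneg]
  exact measureReal_mono (subset_univ _)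

lemma integral_measureReal_Iic_smul_sub (μ₁ μ₂ : Measure α) [IsFiniteMeasure μ₁]
    [IsFiniteMeasure μ₂] (hg : Integrable g ν) :
    (∫ t, μ₁.real (Iic t) • g t ∂ν) - ∫ t, μ₂.real (Iic t) • g t ∂ν
      = ∫ t, (μ₁.real (Iic t) - μ₂.real (Iic t)) • g t ∂ν := by
  rw [← integral_sub (integrable_measureReal_Iic_smul μ₁ hg)
    (integrable_measureReal_Iic_smul μ₂ hg)]
  simp only [sub_smul]

variable [SecondCountableTopology α] [SFinite ν]

lemma integrable_setIntegral_Ici (μ : Measure α) [IsFiniteMeasure μ] (hg : Integrable g ν) :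
    Integrable (fun x ↦ ∫ t in Ici x, g t ∂ν) μ := by
  simpa only [integral_indicator measurableSet_Ici]
    using (integrable_prod_indicator_Ici μ hg).integral_prod_left

lemma integral_setIntegral_Ici [CompleteSpace E] (μ : Measure α) [IsFiniteMeasure μ]
    (hg : Integrable g ν) :
    ∫ x, ∫ t in Ici x, g t ∂ν ∂μ = ∫ t, μ.real (Iic t) • g t ∂ν :=
  calc ∫ x, ∫ t in Ici x, g t ∂ν ∂μ
      = ∫ x, ∫ t, (Ici x).indicator g t ∂ν ∂μ := by
        simp only [integral_indicator measurableSet_Ici]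
    _ = ∫ t, ∫ x, (Iic t).indicator (fun _ ↦ g t) x ∂μ ∂ν :=
        integral_integral_swap (integrable_prod_indicator_Ici μ hg)
    _ = ∫ t, μ.real (Iic t) • g t ∂ν := by
        simp only [integral_indicator_const _ measurableSet_Iic]

end TailIntegral

lemma lipschitzWith_setIntegral_Ici {E : Type*} [NormedAddCommGroup E] [NormedSpace ℝ E]
    {g : ℝ → E} {K : ℝ≥0} (hg : Integrable g) (hK : ∀ t, ‖g t‖ ≤ K) :
    LipschitzWith K fun x ↦ ∫ t in Ici x, g t := by
  refine LipschitzWith.of_dist_le_mul fun x y ↦ ?_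
  rw [dist_eq_norm, intervalIntegral.integral_Ici_sub_Ici' hg.integrableOn hg.integrableOn,
    dist_comm, Real.dist_eq]
  exact intervalIntegral.norm_integral_le_of_norm_le_const fun t _ ↦ hK t

lemma mem_lipschitzBall_iff {X : Type*} [MetricSpace X] {f : X → ℝ} :
    f ∈ LipschitzBall X ↔ (∃ C, ∀ z, ‖f z‖ ≤ C) ∧ LipschitzWith 1 f := by
  simp only [LipschitzBall, mem_ofPred_eq, lipschitzWith_iff_dist_le_mul, NNReal.coe_one, one_mul,
    Real.dist_eq, Real.norm_eq_abs]

lemma setIntegral_Ici_mem_lipschitzBall {g : ℝ → ℝ} (hg : Integrable g) (h1 : ∀ t, ‖g t‖ ≤ 1) :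
    (fun x ↦ ∫ t in Ici x, g t) ∈ LipschitzBall ℝ :=
  mem_lipschitzBall_iff.2
    ⟨⟨∫ t, ‖g t‖, fun _ ↦ (norm_integral_le_integral_norm _).trans
      (setIntegral_le_integral hg.norm (ae_of_all _ fun _ ↦ norm_nonneg _))⟩,
      lipschitzWith_setIntegral_Ici hg h1⟩

section Clamp

variable {f : ℝ → ℝ} {a b : ℝ}

lemma integrable_indicator_deriv (hf : AbsolutelyContinuousOnInterval f a b) :
    Integrable ((Ioc a b).indicator (deriv f)) :=
  (integrable_indicator_iff measurableSet_Ioc).2 hf.intervalIntegrable_deriv.1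

lemma setIntegral_Ici_indicator_deriv (hf : AbsolutelyContinuousOnInterval f a b) (hab : a ≤ b)
    (x : ℝ) :
    ∫ t in Ici x, (Ioc a b).indicator (deriv f) t = f b - f (max a (min b x)) := by
  have h_mem : max a (min b x) ∈ Icc a b := ⟨le_max_left _ _, max_le hab (min_le_left _ _)⟩
  have h_Ioc : Ioi x ∩ Ioc a b = Ioc (max a (min b x)) b := by
    rw [inter_comm, Ioc_inter_Ioi]
    grind
  rw [integral_Ici_eq_integral_Ioi, setIntegral_indicator measurableSet_Ioc, h_Ioc,
    ← intervalIntegral.integral_of_le h_mem.2]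
  refine (hf.mono ?_).integral_deriv_eq_sub
  rw [uIcc_of_le h_mem.2, uIcc_of_le hab]
  exact Icc_subset_Icc_left h_mem.1

lemma integral_clamp (μ : Measure ℝ) [IsFiniteMeasure μ]
    (hf : AbsolutelyContinuousOnInterval f a b) (hab : a ≤ b) :
    ∫ x, f (max a (min b x)) ∂μ
      = μ.real univ * f b - ∫ t, μ.real (Iic t) * (Ioc a b).indicator (deriv f) t := by
  have h_deriv : Integrable ((Ioc a b).indicator (deriv f)) := integrable_indicator_deriv hf
  calc ∫ x, f (max a (min b x)) ∂μ
      = ∫ x, (f b - ∫ t in Ici x, (Ioc a b).indicator (deriv f) t) ∂μ := by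
        simp only [setIntegral_Ici_indicator_deriv hf hab, sub_sub_cancel]
    _ = μ.real univ * f b - ∫ x, (∫ t in Ici x, (Ioc a b).indicator (deriv f) t) ∂μ := by
        rw [integral_sub (integrable_const _) (integrable_setIntegral_Ici μ h_deriv),
          integral_const, smul_eq_mul]
    _ = μ.real univ * f b - ∫ t, μ.real (Iic t) * (Ioc a b).indicator (deriv f) t := by
        simp only [integral_setIntegral_Ici μ h_deriv, smul_eq_mul]

end Clamp

lemma tendsto_integral_clamp {E : Type*} [NormedAddCommGroup E] [NormedSpace ℝ E]
    (μ : Measure ℝ) [IsFiniteMeasure μ] {f : ℝ → E}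
    (hf : Continuous f) {C : ℝ} (hC : ∀ x, ‖f x‖ ≤ C) :
    Tendsto (fun r : ℝ ↦ ∫ x, f (max (-r) (min r x)) ∂μ) atTop (𝓝 (∫ x, f x ∂μ)) := by
  refine tendsto_integral_filter_of_dominated_convergence (fun _ ↦ C)
    (.of_forall fun r ↦ (hf.comp (by fun_prop)).aestronglyMeasurable)
    (.of_forall fun r ↦ ae_of_all _ fun x ↦ hC _) (integrable_const _) (ae_of_all _ fun x ↦ ?_)
  refine tendsto_const_nhds.congr' ?_
  filter_upwards [eventually_ge_atTop |x|] with r hr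
  rw [min_eq_right (abs_le.1 hr).2, max_eq_right (abs_le.1 hr).1]

lemma exists_integrable_mul_eq_indicator_norm {α : Type*} [MeasurableSpace α] {ν : Measure α}
    {D : α → ℝ} (hD : Measurable D) {s : Set α} (hs : MeasurableSet s) (hs_fin : ν s ≠ ∞) :
    ∃ g : α → ℝ, Integrable g ν ∧ (∀ t, ‖g t‖ ≤ 1) ∧
      ∀ t, D t * g t = s.indicator (fun t ↦ ‖D t‖) t := by
  -- Since `0 / 0 = 0`, the quotient `D t / |D t|` is the sign of `D t` also where `D t = 0`.
  have h_sign (t : α) : ‖D t / |D t|‖ ≤ 1 := by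
    rw [Real.norm_eq_abs, abs_div, abs_abs]
    exact div_self_le_one _
  have h_int : IntegrableOn (fun t ↦ D t / |D t|) s ν :=
    Measure.integrableOn_of_bounded hs_fin (hD.div hD.abs).aestronglyMeasurable
      (ae_of_all _ h_sign)
  refine ⟨s.indicator fun t ↦ D t / |D t|, (integrable_indicator_iff hs).2 h_int,
    fun t ↦ (norm_indicator_le_norm_self _ _).trans (h_sign t), fun t ↦ ?_⟩
  by_cases ht : t ∈ s
  · rw [indicator_of_mem ht, indicator_of_mem ht, mul_div_assoc', ← abs_mul_abs_self,
      mul_self_div_self, Real.norm_eq_abs]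
  · rw [indicator_of_notMem ht, indicator_of_notMem ht, mul_zero]

section Distance

variable (μ₁ μ₂ : Measure ℝ) [IsFiniteMeasure μ₁] [IsFiniteMeasure μ₂]

lemma exists_mem_lipschitzBall_enorm_integral_sub_eq {s : Set ℝ} (hs : MeasurableSet s)
    (hs_fin : volume s ≠ ∞) :
    ∃ f ∈ LipschitzBall ℝ, ‖(∫ x, f x ∂μ₁) - ∫ x, f x ∂μ₂‖ₑ
      = ∫⁻ t in s, ‖μ₁.real (Iic t) - μ₂.real (Iic t)‖ₑ := by
  set D : ℝ → ℝ := fun t ↦ μ₁.real (Iic t) - μ₂.real (Iic t)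
  have hD : Measurable D := (measurable_measureReal_Iic μ₁).sub (measurable_measureReal_Iic μ₂)
  obtain ⟨g, hg, hg_le, h_mul⟩ := exists_integrable_mul_eq_indicator_norm hD hs hs_fin
  have h_int : IntegrableOn (fun t ↦ ‖D t‖) s := by
    refine (integrable_indicator_iff hs).1 <|
      ((integrable_measureReal_Iic_smul μ₁ hg).sub
        (integrable_measureReal_Iic_smul μ₂ hg)).congr (ae_of_all _ fun t ↦ ?_)
    exact (sub_smul _ _ _).symm.trans (h_mul t)
  refine ⟨_, setIntegral_Ici_mem_lipschitzBall hg hg_le, ?_⟩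
  calc ‖(∫ x, (∫ t in Ici x, g t) ∂μ₁) - ∫ x, (∫ t in Ici x, g t) ∂μ₂‖ₑ
      = ‖∫ t, D t * g t‖ₑ := by
        rw [integral_setIntegral_Ici μ₁ hg, integral_setIntegral_Ici μ₂ hg,
          integral_measureReal_Iic_smul_sub μ₁ μ₂ hg]
        rfl
    _ = ENNReal.ofReal (∫ t in s, ‖D t‖) := by
        simp only [h_mul, integral_indicator hs]
        exact Real.enorm_of_nonneg (integral_nonneg fun _ ↦ norm_nonneg _)
    _ = ∫⁻ t in s, ‖D t‖ₑ :=
        ofReal_integral_norm_eq_lintegral_enorm <|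
          (integrable_norm_iff hD.aestronglyMeasurable).1 h_int

lemma enorm_integral_clamp_sub_le {f : ℝ → ℝ} {K : ℝ≥0} (hf : LipschitzWith K f)
    (hμ : μ₁ univ = μ₂ univ) {a b : ℝ} (hab : a ≤ b) :
    ‖(∫ x, f (max a (min b x)) ∂μ₁) - ∫ x, f (max a (min b x)) ∂μ₂‖ₑ
      ≤ K * ∫⁻ t, ‖μ₁.real (Iic t) - μ₂.real (Iic t)‖ₑ := by
  have hf_ac : AbsolutelyContinuousOnInterval f a b :=
    hf.lipschitzOnWith.absolutelyContinuousOnInterval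
  have h_mass : μ₁.real univ = μ₂.real univ := (measureReal_eq_measureReal_iff).2 hμ
  set g : ℝ → ℝ := (Ioc a b).indicator (deriv f)
  have hg : Integrable g := integrable_indicator_deriv hf_ac
  have hgK (t : ℝ) : ‖g t‖ₑ ≤ K :=
    (enorm_indicator_le_enorm_self _ _).trans <| by
      simpa only [enorm_le_coe, ← NNReal.coe_le_coe, coe_nnnorm]
        using norm_deriv_le_of_lipschitz (x₀ := t) hf
  calc ‖(∫ x, f (max a (min b x)) ∂μ₁) - ∫ x, f (max a (min b x)) ∂μ₂‖ₑ
      = ‖∫ t, (μ₁.real (Iic t) - μ₂.real (Iic t)) * g t‖ₑ := by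
        rw [integral_clamp μ₁ hf_ac hab, integral_clamp μ₂ hf_ac hab, h_mass,
          sub_sub_sub_cancel_left, enorm_sub_rev]
        exact congrArg _ (integral_measureReal_Iic_smul_sub μ₁ μ₂ hg)
    _ ≤ ∫⁻ t, ‖(μ₁.real (Iic t) - μ₂.real (Iic t)) * g t‖ₑ := enorm_integral_le_lintegral_enorm _
    _ ≤ ∫⁻ t, K * ‖μ₁.real (Iic t) - μ₂.real (Iic t)‖ₑ := by
        refine lintegral_mono fun t ↦ ?_
        rw [enorm_mul, mul_comm]
        gcongr
        exact hgK t
    _ = K * ∫⁻ t, ‖μ₁.real (Iic t) - μ₂.real (Iic t)‖ₑ :=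
        lintegral_const_mul' _ _ ENNReal.coe_ne_top

lemma enorm_integral_sub_le {f : ℝ → ℝ} {K : ℝ≥0} (hf : LipschitzWith K f) {C : ℝ}
    (hC : ∀ x, ‖f x‖ ≤ C) (hμ : μ₁ univ = μ₂ univ) :
    ‖(∫ x, f x ∂μ₁) - ∫ x, f x ∂μ₂‖ₑ ≤ K * ∫⁻ t, ‖μ₁.real (Iic t) - μ₂.real (Iic t)‖ₑ := by
  refine le_of_tendsto ((tendsto_integral_clamp μ₁ hf.continuous hC).sub
    (tendsto_integral_clamp μ₂ hf.continuous hC)).enorm ?_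
  filter_upwards [eventually_ge_atTop 0] with r hr
  exact enorm_integral_clamp_sub_le μ₁ μ₂ hf hμ (neg_le_self hr)

lemma lintegral_enorm_measureReal_Iic_sub_eq_top (hμ : μ₁ univ ≠ μ₂ univ) :
    ∫⁻ t, ‖μ₁.real (Iic t) - μ₂.real (Iic t)‖ₑ = ∞ := by
  by_contra h_fin
  have h_tendsto (μ : Measure ℝ) [IsFiniteMeasure μ] :
      Tendsto (fun t ↦ μ.real (Iic t)) atTop (𝓝 (μ.real univ)) :=
    (ENNReal.tendsto_toReal (measure_ne_top _ _)).comp (tendsto_measure_Iic_atTop μ)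
  have h_int : Integrable fun t ↦ μ₁.real (Iic t) - μ₂.real (Iic t) :=
    ⟨((measurable_measureReal_Iic μ₁).sub (measurable_measureReal_Iic μ₂)).aestronglyMeasurable,
      lt_top_iff_ne_top.2 h_fin⟩
  have h_infinite (s : Set ℝ) (hs : s ∈ atTop) : volume s = ∞ := by
    obtain ⟨b, hb⟩ := mem_atTop_sets.1 hs
    exact measure_mono_top (fun t ht ↦ hb t ht) (Real.volume_Ici (a := b))
  have h_zero : μ₁.real univ - μ₂.real univ = 0 :=
    (h_int.integrableAtFilter _).eq_zero_of_tendsto h_infinite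
      ((h_tendsto μ₁).sub (h_tendsto μ₂))
  exact hμ ((measureReal_eq_measureReal_iff).1 (sub_eq_zero.1 h_zero))

end Distance

theorem dist_eq_integral_cdf_general (μ₁ μ₂ : Measure ℝ)
    [IsFiniteMeasure μ₁] [IsFiniteMeasure μ₂] :
    (⨆ f : LipschitzBall ℝ, ENNReal.ofReal |(∫ x, f.1 x ∂μ₁) - ∫ x, f.1 x ∂μ₂|)
      = ∫⁻ x, ENNReal.ofReal |(μ₁ (Iic x)).toReal - (μ₂ (Iic x)).toReal| := by
  simp only [← Real.enorm_eq_ofReal_abs, ← measureReal_def]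
  apply le_antisymm
  · refine iSup_le fun ⟨f, hf⟩ ↦ ?_
    obtain ⟨⟨C, hC⟩, hf_lip⟩ := mem_lipschitzBall_iff.1 hf
    by_cases hμ : μ₁ univ = μ₂ univ
    · simpa only [ENNReal.coe_one, one_mul] using enorm_integral_sub_le μ₁ μ₂ hf_lip hC hμ
    · exact le_top.trans_eq (lintegral_enorm_measureReal_Iic_sub_eq_top μ₁ μ₂ hμ).symm
  · have h_cover : AECover volume atTop fun r : ℝ ↦ Ioc (-r) r :=
      aecover_Ioc tendsto_neg_atTop_atBot tendsto_id
    have h_meas : Measurable fun t ↦ ‖μ₁.real (Iic t) - μ₂.real (Iic t)‖ₑ :=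
      ((measurable_measureReal_Iic μ₁).sub (measurable_measureReal_Iic μ₂)).enorm
    refine le_of_tendsto' (h_cover.lintegral_tendsto_of_countably_generated h_meas.aemeasurable)
      fun r ↦ ?_
    obtain ⟨f, hf, h_eq⟩ := exists_mem_lipschitzBall_enorm_integral_sub_eq μ₁ μ₂
      (measurableSet_Ioc (a := -r) (b := r)) measure_Ioc_lt_top.ne
    exact h_eq.symm.trans_le (le_iSup_of_le ⟨f, hf⟩ le_rfl)

/-- For Borel probability measures on `ℝ` with distribution functions `F₁, F₂`,
`d(μ₁, μ₂) = ∫ |F₁(x) − F₂(x)| dx` as extended nonnegative reals. -/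
theorem dist_eq_integral_cdf (μ₁ μ₂ : Measure ℝ)
    [IsProbabilityMeasure μ₁] [IsProbabilityMeasure μ₂] :
    (⨆ f : LipschitzBall ℝ, ENNReal.ofReal |(∫ x, f.1 x ∂μ₁) - ∫ x, f.1 x ∂μ₂|)
      = ∫⁻ x, ENNReal.ofReal |(μ₁ (Iic x)).toReal - (μ₂ (Iic x)).toReal| :=
  dist_eq_integral_cdf_general μ₁ μ₂
end

section
/- Let μ₁ and μ₂ be Borel probability measures on ℝ with cumulative distribution functions F₁ and F₂, and let f : ℝ → ℝ be continuously differentiable with derivative f′ of compact support. Then ∫f dμ₁ − ∫f dμ₂ = −∫_{−∞}^{∞} (F₁(x) − F₂(x)) f′(x) dx. -/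
open MeasureTheory Set

/-!
If `f'` is integrable, then `f` has a limit `l` at `+∞` and `f y = l - ∫ x in Ici y, f' x`.
Integrating in `y` and exchanging the integrals over the half-plane `{(y, x) | y ≤ x}` gives
`∫ f dμ = μ(ℝ) l - ∫ F f'`, where `F x = μ (Iic x)`. The term `μ(ℝ) l` depends on `μ` only through
its total mass, so it cancels between `μ₁` and `μ₂`.
-/

open Filter Topology

section Slices

variable {α β E : Type*} [MeasurableSpace α] [MeasurableSpace β]
  [NormedAddCommGroup E] [NormedSpace ℝ E]
  {μ : Measure α} [IsFiniteMeasure μ] {ν : Measure β} {s : Set (α × β)} {g : β → E}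

theorem integrable_measureReal_prodMk_preimage_smul (hs : MeasurableSet s) (hg : Integrable g ν) :
    Integrable (fun b ↦ μ.real ((·, b) ⁻¹' s) • g b) ν :=
  hg.bdd_smul (μ.real univ) (measurable_measure_prodMk_right hs).ennreal_toReal.aestronglyMeasurable
    (.of_forall fun _ ↦
      (Real.norm_of_nonneg measureReal_nonneg).trans_le (measureReal_mono (subset_univ _)))

theorem integrable_setIntegral_prodMk_preimage [SFinite ν] (hs : MeasurableSet s)
    (hg : Integrable g ν) :
    Integrable (fun a ↦ ∫ b in Prod.mk a ⁻¹' s, g b ∂ν) μ := by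
  simp only [← integral_indicator (measurable_prodMk_left hs)]
  exact ((hg.comp_snd μ).indicator hs).integral_prod_left

theorem integral_setIntegral_prodMk_preimage [CompleteSpace E] [SFinite ν] (hs : MeasurableSet s)
    (hg : Integrable g ν) :
    ∫ a, ∫ b in Prod.mk a ⁻¹' s, g b ∂ν ∂μ = ∫ b, μ.real ((·, b) ⁻¹' s) • g b ∂ν := by
  simp only [← integral_indicator (measurable_prodMk_left hs),
    ← integral_indicator_const _ (measurable_prodMk_right hs)]
  exact integral_integral_swap ((hg.comp_snd μ).indicator hs)

end Slices

section Derivative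

variable {E : Type*} [NormedAddCommGroup E] [NormedSpace ℝ E] [CompleteSpace E] {f f' : ℝ → E}

theorem eq_sub_setIntegral_Ici_of_hasDerivAt_of_tendsto {l : E}
    (hf : ∀ x, HasDerivAt f (f' x) x) (hf' : Integrable f') (hl : Tendsto f atTop (𝓝 l)) (y : ℝ) :
    f y = l - ∫ x in Ici y, f' x := by
  rw [integral_Ici_eq_integral_Ioi,
    integral_Ioi_of_hasDerivAt_of_tendsto' (fun x _ ↦ hf x) hf'.integrableOn hl, sub_sub_cancel]

theorem integral_eq_sub_integral_measureReal_Iic_smul {l : E} (μ : Measure ℝ) [IsFiniteMeasure μ]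
    (hf : ∀ x, HasDerivAt f (f' x) x) (hf' : Integrable f') (hl : Tendsto f atTop (𝓝 l)) :
    ∫ x, f x ∂μ = μ.real univ • l - ∫ x, μ.real (Iic x) • f' x := by
  have measurableSet_halfPlane : MeasurableSet {p : ℝ × ℝ | p.1 ≤ p.2} := measurableSet_le'
  have tail_integrable : Integrable (fun y ↦ ∫ x in Ici y, f' x) μ :=
    integrable_setIntegral_prodMk_preimage measurableSet_halfPlane hf'
  calc ∫ y, f y ∂μ = ∫ y, (l - ∫ x in Ici y, f' x) ∂μ :=
        integral_congr_ae (.of_forall (eq_sub_setIntegral_Ici_of_hasDerivAt_of_tendsto hf hf' hl))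
    _ = μ.real univ • l - ∫ y, (∫ x in Ici y, f' x) ∂μ := by
        rw [integral_sub (integrable_const l) tail_integrable, integral_const]
    _ = μ.real univ • l - ∫ x, μ.real (Iic x) • f' x :=
        congrArg _ (integral_setIntegral_prodMk_preimage measurableSet_halfPlane hf')

theorem integral_sub_eq_neg_integral_cdf_mul_deriv_general (μ₁ μ₂ : Measure ℝ)
    [IsFiniteMeasure μ₁] [IsFiniteMeasure μ₂] (hμ : μ₁ univ = μ₂ univ)
    (hf : ∀ x, HasDerivAt f (f' x) x) (hf' : Integrable f') :
    (∫ x, f x ∂μ₁) - ∫ x, f x ∂μ₂ = -∫ x, (μ₁.real (Iic x) - μ₂.real (Iic x)) • f' x := by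
  have hl : Tendsto f atTop (𝓝 (limUnder atTop f)) :=
    tendsto_limUnder_of_hasDerivAt_of_integrableOn_Ioi (a := 0) (fun x _ ↦ hf x) hf'.integrableOn
  have cdf_smul_integrable (μ : Measure ℝ) [IsFiniteMeasure μ] :
      Integrable fun x ↦ μ.real (Iic x) • f' x :=
    integrable_measureReal_prodMk_preimage_smul measurableSet_le' hf'
  have mass_eq : μ₁.real univ = μ₂.real univ := congrArg ENNReal.toReal hμ
  simp only [sub_smul]
  rw [integral_eq_sub_integral_measureReal_Iic_smul μ₁ hf hf' hl,
    integral_eq_sub_integral_measureReal_Iic_smul μ₂ hf hf' hl, mass_eq,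
    integral_sub (cdf_smul_integrable μ₁) (cdf_smul_integrable μ₂), sub_sub_sub_cancel_left,
    neg_sub]

end Derivative

/-- For Borel probability measures `μ₁, μ₂` on `ℝ` with distribution functions
`F₁, F₂`, and `f : ℝ → ℝ` continuously differentiable with derivative of compact
support, `∫f dμ₁ − ∫f dμ₂ = −∫ (F₁(x) − F₂(x)) f′(x) dx`. -/
theorem integral_sub_eq_neg_integral_cdf_mul_deriv (μ₁ μ₂ : Measure ℝ)
    [IsProbabilityMeasure μ₁] [IsProbabilityMeasure μ₂]
    (f : ℝ → ℝ) (hf : ContDiff ℝ 1 f) (hf' : HasCompactSupport (deriv f)) :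
    (∫ x, f x ∂μ₁) - ∫ x, f x ∂μ₂
      = -∫ x, ((μ₁ (Iic x)).toReal - (μ₂ (Iic x)).toReal) * deriv f x :=
  integral_sub_eq_neg_integral_cdf_mul_deriv_general μ₁ μ₂ (by simp)
    (fun x ↦ (hf.differentiable one_ne_zero x).hasDerivAt)
    ((hf.continuous_deriv le_rfl).integrable_of_hasCompactSupport hf')
end

section
/- Let (X,d) be a nonempty proper metric space (closed balls are compact), and let φ₁, φ₂ be positive linear functionals on the space of bounded continuous real-valued functions on X with φ₁(1) = φ₂(1) = 1. Suppose their distance d(φ₁,φ₂) = sup{|φ₁(f) − φ₂(f)| : f bounded, 1-Lipschitz} is finite, i.e., there is M < ∞ with |φ₁(f) − φ₂(f)| ≤ M for every bounded f with |f(x) − f(y)| ≤ d(x,y) for all x,y. Then φ₁(∞) = φ₂(∞). -/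
open BoundedContinuousFunction

/-- The weight at infinity of a normalized positive linear functional on the
bounded continuous functions of a metric space:
`φ(∞) = 1 − sup{φ(f) : f continuous with compact support, 0 ≤ f ≤ 1}`. -/
noncomputable def weightAtInfty {X : Type*} [MetricSpace X]
    (φ : (X →ᵇ ℝ) →ₗ[ℝ] ℝ) : ℝ :=
  1 - sSup {r | ∃ f : X →ᵇ ℝ, HasCompactSupport ⇑f ∧ (∀ x, 0 ≤ f x ∧ f x ≤ 1) ∧ r = φ f}

/-!
In a proper space every neighbourhood of finite radius of a compact set is relatively compact, so
a compactly supported `f` with `0 ≤ f ≤ 1` lies below compactly supported cutoffs `g` with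
`0 ≤ g ≤ 1` that are `K`-Lipschitz for arbitrarily small `K > 0`. Since `K⁻¹ • g` is `1`-Lipschitz,
`φ₁ f ≤ φ₁ g ≤ φ₂ g + K * M ≤ s + K * M`, where `s` is the supremum in the definition of `φ₂(∞)`.
Letting `K → 0` gives `φ₁ f ≤ s`, and the roles of `φ₁` and `φ₂` can be exchanged.
-/

open Bornology Filter Metric Set Topology
open scoped NNReal

section CompactMass

variable {X : Type*} [TopologicalSpace X]

/-- The mass that a positive linear functional on the bounded continuous functions carries on
compact sets, so that `φ(∞) = 1 - compactMass φ`. The supremum of an unbounded set of reals is `0`,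
so this is meaningful only when the values are bounded, as they are for monotone `φ`. -/
noncomputable def compactMass (φ : (X →ᵇ ℝ) →ₗ[ℝ] ℝ) : ℝ :=
  sSup {r | ∃ f : X →ᵇ ℝ, HasCompactSupport ⇑f ∧ (∀ x, 0 ≤ f x ∧ f x ≤ 1) ∧ r = φ f}

theorem compactMass_le {φ : (X →ᵇ ℝ) →ₗ[ℝ] ℝ} {C : ℝ}
    (h : ∀ f : X →ᵇ ℝ, HasCompactSupport f → (∀ x, 0 ≤ f x ∧ f x ≤ 1) → φ f ≤ C) :
    compactMass φ ≤ C := by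
  refine csSup_le ⟨φ 0, 0, HasCompactSupport.zero, by simp, rfl⟩ ?_
  rintro _ ⟨f, hf, hf01, rfl⟩
  exact h f hf hf01

theorem le_compactMass {φ : (X →ᵇ ℝ) →ₗ[ℝ] ℝ} (hφ : Monotone φ) {f : X →ᵇ ℝ}
    (hf : HasCompactSupport f) (hf01 : ∀ x, 0 ≤ f x ∧ f x ≤ 1) : φ f ≤ compactMass φ := by
  refine le_csSup ⟨φ 1, ?_⟩ ⟨f, hf, hf01, rfl⟩
  rintro _ ⟨g, -, hg01, rfl⟩
  exact hφ fun x ↦ (hg01 x).2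

end CompactMass

section Lipschitz

variable {X : Type*} [PseudoMetricSpace X]

theorem exists_lipschitzWith_hasCompactSupport_eqOn_one [ProperSpace X] {s : Set X}
    (hs : IsBounded s) {K : ℝ≥0} (hK : 0 < K) :
    ∃ g : X →ᵇ ℝ, LipschitzWith K g ∧ HasCompactSupport g ∧ (∀ x, 0 ≤ g x ∧ g x ≤ 1) ∧
      EqOn g 1 s := by
  have hδ : 0 < (K : ℝ)⁻¹ := by positivity
  let u : X →ᵇ ℝ≥0 := thickenedIndicator hδ s
  have hu : LipschitzWith K u := by
    simpa only [Real.toNNReal_inv, Real.toNNReal_coe, inv_inv] using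
      lipschitzWith_thickenedIndicator hδ s
  have hcoe : LipschitzWith 1 ((↑) : ℝ≥0 → ℝ) := LipschitzWith.subtype_val _
  refine ⟨u.comp _ hcoe, ?_, ?_, fun x ↦ ⟨(u x).coe_nonneg, ?_⟩, fun x hx ↦ ?_⟩
  · exact one_mul K ▸ hcoe.comp hu
  · have hcompact : IsCompact (closure (thickening (K : ℝ)⁻¹ s)) :=
      hs.thickening.isCompact_closure
    refine .intro hcompact fun x hx ↦ ?_
    exact congrArg NNReal.toReal (thickenedIndicator_zero hδ s (notMem_subset subset_closure hx))
  · exact thickenedIndicator_le_one hδ s x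
  · exact congrArg NNReal.toReal (thickenedIndicator_one hδ s hx)

theorem map_le_mul_of_lipschitzWith {ψ : (X →ᵇ ℝ) →ₗ[ℝ] ℝ} {M : ℝ}
    (hψ : ∀ f : X →ᵇ ℝ, HasCompactSupport f → LipschitzWith 1 f → ψ f ≤ M)
    {K : ℝ≥0} (hK : 0 < K) {f : X →ᵇ ℝ} (hf : HasCompactSupport f) (hfK : LipschitzWith K f) :
    ψ f ≤ K * M := by
  have hlip : LipschitzWith 1 ⇑((K : ℝ)⁻¹ • f) := by
    simpa [hK.ne', Function.comp_def] using (lipschitzWith_smul (K : ℝ)⁻¹).comp hfK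
  have hscaled : (K : ℝ)⁻¹ * ψ f ≤ M := by
    simpa using hψ ((K : ℝ)⁻¹ • f) hf.smul_left hlip
  rwa [inv_mul_le_iff₀ (by exact_mod_cast hK)] at hscaled

variable [ProperSpace X] {φ₁ φ₂ : (X →ᵇ ℝ) →ₗ[ℝ] ℝ} {M : ℝ}

theorem compactMass_le_compactMass (hφ₁ : Monotone φ₁) (hφ₂ : Monotone φ₂)
    (hM : ∀ f : X →ᵇ ℝ, HasCompactSupport f → LipschitzWith 1 f → φ₁ f - φ₂ f ≤ M) :
    compactMass φ₁ ≤ compactMass φ₂ := by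
  refine compactMass_le fun f hf hf01 ↦ ?_
  have hbound (K : ℝ≥0) (hK : 0 < K) : φ₁ f ≤ compactMass φ₂ + K * M := by
    obtain ⟨g, hgK, hg, hg01, hg1⟩ :=
      exists_lipschitzWith_hasCompactSupport_eqOn_one hf.isCompact.isBounded hK
    have hfg : f ≤ g := fun x ↦ by
      by_cases hx : x ∈ tsupport f
      · exact (hf01 x).2.trans (hg1 hx).ge
      · exact (image_eq_zero_of_notMem_tsupport hx).trans_le (hg01 x).1
    have hdiff : φ₁ g - φ₂ g ≤ K * M := map_le_mul_of_lipschitzWith (ψ := φ₁ - φ₂) hM hK hg hgK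
    calc
      φ₁ f ≤ φ₁ g := hφ₁ hfg
      _ ≤ φ₂ g + K * M := by linarith
      _ ≤ compactMass φ₂ + K * M := by gcongr; exact le_compactMass hφ₂ hg hg01
  have hlim : Tendsto (fun K : ℝ≥0 ↦ compactMass φ₂ + K * M) (𝓝[>] 0) (𝓝 (compactMass φ₂)) :=
    tendsto_nhdsWithin_of_tendsto_nhds <| Continuous.tendsto' (by fun_prop) _ _ (by simp)
  exact ge_of_tendsto hlim (eventually_mem_nhdsWithin.mono hbound)

theorem weightAtInfty_eq_of_finite_dist_general (hφ₁ : Monotone φ₁) (hφ₂ : Monotone φ₂)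
    (hM : ∀ f : X →ᵇ ℝ, HasCompactSupport f → LipschitzWith 1 f → |φ₁ f - φ₂ f| ≤ M) :
    compactMass φ₁ = compactMass φ₂ :=
  le_antisymm
    (compactMass_le_compactMass hφ₁ hφ₂ fun f hf hf1 ↦ (abs_sub_le_iff.1 (hM f hf hf1)).1)
    (compactMass_le_compactMass hφ₂ hφ₁ fun f hf hf1 ↦ (abs_sub_le_iff.1 (hM f hf hf1)).2)

end Lipschitz

/-- Two normalized positive linear functionals on the bounded continuous functions
of a nonempty proper metric space which are at finite distance (their values on
bounded `1`-Lipschitz functions differ by at most some `M`) have the same weight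
at infinity. -/
theorem weightAtInfty_eq_of_finite_dist {X : Type*} [MetricSpace X] [ProperSpace X] [Nonempty X]
    (φ₁ φ₂ : (X →ᵇ ℝ) →ₗ[ℝ] ℝ)
    (hpos₁ : ∀ f : X →ᵇ ℝ, (∀ x, 0 ≤ f x) → 0 ≤ φ₁ f)
    (hpos₂ : ∀ f : X →ᵇ ℝ, (∀ x, 0 ≤ f x) → 0 ≤ φ₂ f)
    (hnorm₁ : φ₁ 1 = 1) (hnorm₂ : φ₂ 1 = 1)
    (M : ℝ)
    (hM : ∀ f : X →ᵇ ℝ, (∀ x y, |f x - f y| ≤ dist x y) → |φ₁ f - φ₂ f| ≤ M) :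
    weightAtInfty φ₁ = weightAtInfty φ₂ :=
  congrArg (1 - ·) <| weightAtInfty_eq_of_finite_dist_general ((monotone_iff_map_nonneg φ₁).2 hpos₁)
    ((monotone_iff_map_nonneg φ₂).2 hpos₂) fun f _ hf ↦ hM f fun x y ↦ by
      simpa [Real.dist_eq] using hf.dist_le_mul x y
end

section
/- Let (X,d_X) and (Y,d_Y) be nonempty proper metric spaces and equip X × Y with the max metric. Let φ be a positive linear functional on the space of bounded continuous real-valued functions on X × Y with φ(1) = 1, and define its marginals φ₁(f) = φ(f ∘ π_X) for bounded continuous f on X and φ₂(g) = φ(g ∘ π_Y) for bounded continuous g on Y, where π_X, π_Y are the coordinate projections. Then the weights at infinity satisfy φ(∞) ≤ φ₁(∞) + φ₂(∞). In particular, if φ₁(∞) = φ₂(∞) = 0 then φ(∞) = 0. -/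
open BoundedContinuousFunction

/-!
The product of a cutoff function on `X` with a cutoff function on `Y` is a cutoff function on
`X × Y`, and `1 - f g ≤ (1 - f) + (1 - g)` whenever `f, g ≤ 1`. Applying `φ` and taking the infimum
over `f` and `g` bounds the mass at infinity of `φ` by those of its marginals.
-/

theorem one_sub_mul_le_one_sub_add_one_sub {R : Type*} [Ring R] [PartialOrder R] [IsOrderedRing R]
    {a b : R} (ha : a ≤ 1) (hb : b ≤ 1) : 1 - a * b ≤ (1 - a) + (1 - b) := by
  have hprod : 0 ≤ (1 - a) * (1 - b) := mul_nonneg (sub_nonneg.mpr ha) (sub_nonneg.mpr hb)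
  calc 1 - a * b ≤ 1 - a * b + (1 - a) * (1 - b) := le_add_of_nonneg_right hprod
    _ = (1 - a) + (1 - b) := by noncomm_ring

section CompactSupport

variable {X Y R : Type*} [TopologicalSpace X] [TopologicalSpace Y] [MulZeroClass R]

theorem hasCompactSupport_fst_mul_snd {f : X → R} {g : Y → R}
    (hf : HasCompactSupport f) (hg : HasCompactSupport g) :
    HasCompactSupport fun p : X × Y ↦ f p.1 * g p.2 := by
  refine HasCompactSupport.intro' (hf.isCompact.prod hg.isCompact)
    ((isClosed_tsupport f).prod (isClosed_tsupport g)) fun p hp ↦ ?_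
  rcases not_and_or.mp hp with hp₁ | hp₂
  · rw [image_eq_zero_of_notMem_tsupport hp₁, zero_mul]
  · rw [image_eq_zero_of_notMem_tsupport hp₂, mul_zero]

end CompactSupport

section Cutoffs

variable {X Y : Type*} [TopologicalSpace X] [TopologicalSpace Y]

/-- The cutoff functions on `X`: the compactly supported continuous functions with values in
`[0, 1]`, taken as elements of `X →ᵇ ℝ` so that functionals on `X →ᵇ ℝ` apply to them. -/
def compactCutoffs (X : Type*) [TopologicalSpace X] : Set (X →ᵇ ℝ) :=
  {f | HasCompactSupport f ∧ ∀ x, 0 ≤ f x ∧ f x ≤ 1}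

theorem zero_mem_compactCutoffs : (0 : X →ᵇ ℝ) ∈ compactCutoffs X :=
  ⟨HasCompactSupport.zero, fun _ ↦ ⟨le_rfl, zero_le_one⟩⟩

theorem le_one_of_mem_compactCutoffs {f : X →ᵇ ℝ} (hf : f ∈ compactCutoffs X) : f ≤ 1 :=
  fun x ↦ (hf.2 x).2

theorem fst_mul_snd_mem_compactCutoffs {f : X →ᵇ ℝ} {g : Y →ᵇ ℝ}
    (hf : f ∈ compactCutoffs X) (hg : g ∈ compactCutoffs Y) :
    f.compContinuous ⟨Prod.fst, continuous_fst⟩ * g.compContinuous ⟨Prod.snd, continuous_snd⟩ ∈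
      compactCutoffs (X × Y) :=
  ⟨hasCompactSupport_fst_mul_snd hf.1 hg.1, fun p ↦
    ⟨mul_nonneg (hf.2 p.1).1 (hg.2 p.2).1,
      mul_le_one₀ (hf.2 p.1).2 (hg.2 p.2).1 (hg.2 p.2).2⟩⟩

theorem image_compactCutoffs (φ : (X →ᵇ ℝ) → ℝ) :
    φ '' compactCutoffs X =
      {r | ∃ f : X →ᵇ ℝ, HasCompactSupport f ∧ (∀ x, 0 ≤ f x ∧ f x ≤ 1) ∧ r = φ f} := by
  ext r
  simp only [Set.mem_image, compactCutoffs, Set.mem_ofPred_eq, and_assoc, eq_comm]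

end Cutoffs

section MassAtInfty

variable {X Y Z : Type*} [TopologicalSpace X] [TopologicalSpace Y] [TopologicalSpace Z]

/-- The mass at infinity of a linear functional `φ` on bounded continuous functions: the part of
its total mass `φ 1` that cutoff functions do not see. It is the weight at infinity `φ(∞)` when
`φ 1 = 1`; allowing an arbitrary total mass spares a normalization. The supremum has its intended
value for positive `φ`, where the set is bounded above by `φ 1`. -/
noncomputable def massAtInfty (φ : (X →ᵇ ℝ) →ₗ[ℝ] ℝ) : ℝ :=
  φ 1 - sSup (φ '' compactCutoffs X)

/-- The image of a functional on `Z →ᵇ ℝ` under a continuous map `π : Z → X`, acting by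
`f ↦ φ (f ∘ π)`; the marginals of `φ` are its images under the coordinate projections. -/
noncomputable def pushforward (φ : (Z →ᵇ ℝ) →ₗ[ℝ] ℝ) (π : C(Z, X)) : (X →ᵇ ℝ) →ₗ[ℝ] ℝ :=
  φ ∘ₗ compContinuousCLM ℝ ℝ π

theorem pushforward_apply (φ : (Z →ᵇ ℝ) →ₗ[ℝ] ℝ) (π : C(Z, X)) (f : X →ᵇ ℝ) :
    pushforward φ π f = φ (f.compContinuous π) :=
  rfl

theorem massAtInfty_le {φ : (X →ᵇ ℝ) →ₗ[ℝ] ℝ} (hφ : Monotone φ) {f : X →ᵇ ℝ}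
    (hf : f ∈ compactCutoffs X) : massAtInfty φ ≤ φ (1 - f) := by
  have hbdd : BddAbove (φ '' compactCutoffs X) :=
    hφ.map_bddAbove ⟨1, fun _ ↦ le_one_of_mem_compactCutoffs⟩
  rw [massAtInfty, map_sub]
  exact sub_le_sub_left (le_csSup hbdd (Set.mem_image_of_mem φ hf)) _

theorem le_massAtInfty {φ : (X →ᵇ ℝ) →ₗ[ℝ] ℝ} {a : ℝ}
    (h : ∀ f ∈ compactCutoffs X, a ≤ φ (1 - f)) : a ≤ massAtInfty φ := by
  refine le_sub_comm.mp (csSup_le (Set.Nonempty.image φ ⟨0, zero_mem_compactCutoffs⟩) ?_)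
  rintro _ ⟨f, hf, rfl⟩
  exact le_sub_comm.mp ((h f hf).trans_eq (map_sub φ 1 f))

theorem massAtInfty_nonneg {φ : (X →ᵇ ℝ) →ₗ[ℝ] ℝ} (hφ : Monotone φ) : 0 ≤ massAtInfty φ :=
  le_massAtInfty fun _ hf ↦
    (monotone_iff_map_nonneg φ).mp hφ _ (sub_nonneg.mpr (le_one_of_mem_compactCutoffs hf))

theorem massAtInfty_le_pushforward_fst_add_pushforward_snd {φ : ((X × Y) →ᵇ ℝ) →ₗ[ℝ] ℝ}
    (hφ : Monotone φ) {f : X →ᵇ ℝ} {g : Y →ᵇ ℝ} (hf : f ∈ compactCutoffs X)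
    (hg : g ∈ compactCutoffs Y) :
    massAtInfty φ ≤ pushforward φ ⟨Prod.fst, continuous_fst⟩ (1 - f) +
      pushforward φ ⟨Prod.snd, continuous_snd⟩ (1 - g) := by
  set F : (X × Y) →ᵇ ℝ := f.compContinuous ⟨Prod.fst, continuous_fst⟩
  set G : (X × Y) →ᵇ ℝ := g.compContinuous ⟨Prod.snd, continuous_snd⟩
  have hFG : 1 - F * G ≤ (1 - F) + (1 - G) := fun p ↦
    one_sub_mul_le_one_sub_add_one_sub (hf.2 p.1).2 (hg.2 p.2).2
  calc massAtInfty φ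
      ≤ φ (1 - F * G) := massAtInfty_le hφ (fst_mul_snd_mem_compactCutoffs hf hg)
    _ ≤ φ ((1 - F) + (1 - G)) := hφ hFG
    _ = φ (1 - F) + φ (1 - G) := map_add φ _ _

theorem weightAtInfty_eq_massAtInfty_of_map_one {X : Type*} [MetricSpace X] {φ : (X →ᵇ ℝ) →ₗ[ℝ] ℝ}
    (hnorm : φ 1 = 1) : weightAtInfty φ = massAtInfty φ := by
  rw [weightAtInfty, massAtInfty, hnorm, image_compactCutoffs]

theorem massAtInfty_pushforward_of_map_one {φ : (Z →ᵇ ℝ) →ₗ[ℝ] ℝ} (hnorm : φ 1 = 1) (π : C(Z, X)) :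
    massAtInfty (pushforward φ π) =
      1 - sSup {r | ∃ f : X →ᵇ ℝ, HasCompactSupport f ∧ (∀ x, 0 ≤ f x ∧ f x ≤ 1) ∧
        r = φ (f.compContinuous π)} := by
  simp only [massAtInfty, image_compactCutoffs, pushforward_apply, one_compContinuous, hnorm]

end MassAtInfty

theorem weightAtInfty_le_sum_marginals_general {X Y : Type*} [TopologicalSpace X]
    [TopologicalSpace Y] (φ : ((X × Y) →ᵇ ℝ) →ₗ[ℝ] ℝ) (hφ : Monotone φ) :
    massAtInfty φ ≤ massAtInfty (pushforward φ ⟨Prod.fst, continuous_fst⟩) +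
        massAtInfty (pushforward φ ⟨Prod.snd, continuous_snd⟩) ∧
      (massAtInfty (pushforward φ ⟨Prod.fst, continuous_fst⟩) = 0 →
        massAtInfty (pushforward φ ⟨Prod.snd, continuous_snd⟩) = 0 → massAtInfty φ = 0) := by
  have hle : massAtInfty φ ≤ massAtInfty (pushforward φ ⟨Prod.fst, continuous_fst⟩) +
      massAtInfty (pushforward φ ⟨Prod.snd, continuous_snd⟩) := by
    refine sub_le_iff_le_add.mp (le_massAtInfty fun f hf ↦ sub_le_comm.mp ?_)
    exact le_massAtInfty fun g hg ↦
      sub_le_iff_le_add'.mpr (massAtInfty_le_pushforward_fst_add_pushforward_snd hφ hf hg)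
  exact ⟨hle, fun hfst hsnd ↦
    le_antisymm (by simpa only [hfst, hsnd, add_zero] using hle) (massAtInfty_nonneg hφ)⟩

/-- For a normalized positive linear functional `φ` on the bounded continuous
functions of a product `X × Y` of nonempty proper metric spaces (with the max
metric), the weight at infinity of `φ` is at most the sum of the weights at
infinity of its two marginals `f ↦ φ(f ∘ π_X)` and `g ↦ φ(g ∘ π_Y)`; in
particular it vanishes when both marginal weights vanish. -/
theorem weightAtInfty_le_sum_marginals {X Y : Type*}
    [MetricSpace X] [ProperSpace X] [Nonempty X]
    [MetricSpace Y] [ProperSpace Y] [Nonempty Y]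
    (φ : ((X × Y) →ᵇ ℝ) →ₗ[ℝ] ℝ)
    (hpos : ∀ f : (X × Y) →ᵇ ℝ, (∀ p, 0 ≤ f p) → 0 ≤ φ f) (hnorm : φ 1 = 1) :
    weightAtInfty φ ≤
        (1 - sSup {r | ∃ f : X →ᵇ ℝ, HasCompactSupport ⇑f ∧ (∀ x, 0 ≤ f x ∧ f x ≤ 1) ∧
            r = φ (f.compContinuous (ContinuousMap.mk Prod.fst continuous_fst))}) +
        (1 - sSup {r | ∃ g : Y →ᵇ ℝ, HasCompactSupport ⇑g ∧ (∀ y, 0 ≤ g y ∧ g y ≤ 1) ∧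
            r = φ (g.compContinuous (ContinuousMap.mk Prod.snd continuous_snd))}) ∧
      ((1 - sSup {r | ∃ f : X →ᵇ ℝ, HasCompactSupport ⇑f ∧ (∀ x, 0 ≤ f x ∧ f x ≤ 1) ∧
            r = φ (f.compContinuous (ContinuousMap.mk Prod.fst continuous_fst))}) = 0 →
       (1 - sSup {r | ∃ g : Y →ᵇ ℝ, HasCompactSupport ⇑g ∧ (∀ y, 0 ≤ g y ∧ g y ≤ 1) ∧
            r = φ (g.compContinuous (ContinuousMap.mk Prod.snd continuous_snd))}) = 0 →
       weightAtInfty φ = 0) := by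
  simpa only [massAtInfty_pushforward_of_map_one hnorm,
    ← weightAtInfty_eq_massAtInfty_of_map_one hnorm] using
      weightAtInfty_le_sum_marginals_general φ ((monotone_iff_map_nonneg φ).mpr hpos)
end

section
/- There exists a constant C > 0 such that for every Schwartz function ψ : ℝ → ℂ with ∫_ℝ |ψ(x)|² dx = 1, the product of absolute first moments of position and momentum satisfies (∫_ℝ |x| |ψ(x)|² dx) · (∫_ℝ |ξ| |ψ̂(ξ)|² dξ) ≥ C, where ψ̂ denotes the Fourier transform of ψ. -/
/-!
A function concentrated near the origin differs much from its translates. At every point `x`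
either `‖x‖` or `‖x - a‖` is at least `‖a‖ / 2`, so the translate of `f` by `a` can be `L²`-close
to `f` only if the first position moment `A` is of order at least `‖a‖ M`, where `M = ∫ ‖f‖²`.
By Plancherel and `|e^{iθ} - 1|² ≤ 2 |θ|`, the squared `L²` distance from `f` to this
translate is at most `4π ‖a‖ B`, with `B` the first momentum moment. Together these give
`‖a‖ M ≤ 4π ‖a‖² B + 3 A` for all `a`, and the discriminant of this quadratic in `‖a‖` is the
uncertainty inequality `M² ≤ 48π A B`.
-/

open MeasureTheory SchwartzMap
open scoped FourierTransform
open scoped RealInnerProductSpace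

section Pointwise

lemma norm_fourierChar_sub_one_sq_le (t : ℝ) :
    ‖(Real.fourierChar t : ℂ) - 1‖ ^ 2 ≤ 4 * Real.pi * |t| := by
  have linear_bound : ‖(Real.fourierChar t : ℂ) - 1‖ ≤ 2 * Real.pi * |t| := by
    rw [Real.fourierChar_apply, mul_comm _ Complex.I]
    refine Real.norm_exp_I_mul_ofReal_sub_one_le.trans_eq ?_
    rw [norm_mul, Real.norm_of_nonneg Real.two_pi_pos.le, Real.norm_eq_abs]
  have uniform_bound : ‖(Real.fourierChar t : ℂ) - 1‖ ≤ 2 :=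
    (norm_sub_le _ _).trans_eq (by rw [Circle.norm_coe, norm_one, one_add_one_eq_two])
  calc ‖(Real.fourierChar t : ℂ) - 1‖ ^ 2
      = ‖(Real.fourierChar t : ℂ) - 1‖ * ‖(Real.fourierChar t : ℂ) - 1‖ := sq _
    _ ≤ 2 * (2 * Real.pi * |t|) := by gcongr
    _ = 4 * Real.pi * |t| := by ring

variable {F : Type*} [SeminormedAddCommGroup F]

lemma norm_sq_le_two_mul_norm_sub_sq_add (u v : F) :
    ‖u‖ ^ 2 ≤ 2 * (‖u - v‖ ^ 2 + ‖v‖ ^ 2) :=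
  calc ‖u‖ ^ 2 ≤ (‖u - v‖ + ‖v‖) ^ 2 := by gcongr; exact norm_le_norm_sub_add u v
    _ ≤ 2 * (‖u - v‖ ^ 2 + ‖v‖ ^ 2) := add_sq_le

lemma mul_norm_sq_add_norm_sq_le (u v : F) {r s t : ℝ} (hr : 0 ≤ r) (hs : 0 ≤ s) (ht : 0 ≤ t)
    (h : t ≤ r + s) :
    t * (‖u‖ ^ 2 + ‖v‖ ^ 2) ≤ 2 * t * ‖u - v‖ ^ 2 + 3 * (r * ‖u‖ ^ 2 + s * ‖v‖ ^ 2) := by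
  obtain ⟨p, q, hp, hq, hpr, hqs, rfl⟩ :
      ∃ p q : ℝ, 0 ≤ p ∧ 0 ≤ q ∧ p ≤ r ∧ q ≤ s ∧ p + q = t :=
    ⟨min r t, t - min r t, le_min hr ht, sub_nonneg.2 (min_le_right r t), min_le_left r t,
      by rcases min_cases r t with hmin | hmin <;> linarith, add_sub_cancel _ _⟩
  have hu : ‖u‖ ^ 2 + ‖v‖ ^ 2 ≤ 2 * ‖u - v‖ ^ 2 + 3 * ‖u‖ ^ 2 := by
    have := norm_sq_le_two_mul_norm_sub_sq_add v u
    rw [norm_sub_rev] at this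
    linarith
  have hv : ‖u‖ ^ 2 + ‖v‖ ^ 2 ≤ 2 * ‖u - v‖ ^ 2 + 3 * ‖v‖ ^ 2 := by
    linarith [norm_sq_le_two_mul_norm_sub_sq_add u v]
  calc (p + q) * (‖u‖ ^ 2 + ‖v‖ ^ 2)
      = p * (‖u‖ ^ 2 + ‖v‖ ^ 2) + q * (‖u‖ ^ 2 + ‖v‖ ^ 2) := add_mul ..
    _ ≤ p * (2 * ‖u - v‖ ^ 2 + 3 * ‖u‖ ^ 2) + q * (2 * ‖u - v‖ ^ 2 + 3 * ‖v‖ ^ 2) := by gcongr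
    _ = 2 * (p + q) * ‖u - v‖ ^ 2 + 3 * (p * ‖u‖ ^ 2 + q * ‖v‖ ^ 2) := by ring
    _ ≤ 2 * (p + q) * ‖u - v‖ ^ 2 + 3 * (r * ‖u‖ ^ 2 + s * ‖v‖ ^ 2) := by gcongr

end Pointwise

lemma integral_comp_sub_add_self {G : Type*} [AddGroup G] [MeasurableSpace G] [MeasurableAdd G]
    {μ : Measure G} [μ.IsAddRightInvariant] {E : Type*} [NormedAddCommGroup E] [NormedSpace ℝ E]
    {g : G → E} (hg : Integrable g μ) (a : G) :
    ∫ x, g (x - a) + g x ∂μ = (2 : ℝ) • ∫ x, g x ∂μ := by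
  rw [integral_add (hg.comp_sub_right a) hg, integral_sub_right_eq_self, two_smul]

section Schwartz

variable {E F : Type*} [NormedAddCommGroup E] [NormedSpace ℝ E] [MeasurableSpace E] [BorelSpace E]
  [SecondCountableTopology E] [NormedAddCommGroup F] [NormedSpace ℝ F]

lemma integrable_norm_pow_mul_norm_pow_succ (μ : Measure E) [μ.HasTemperateGrowth]
    (f : 𝓢(E, F)) (k n : ℕ) : Integrable (fun x ↦ ‖x‖ ^ k * ‖f x‖ ^ (n + 1)) μ := by
  obtain ⟨C, -, hC⟩ := f.decay 0 0
  have f_bound : ∀ x, ‖f x‖ ≤ C := fun x ↦ by simpa using hC x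
  have pow_bound : ∀ x, ‖‖f x‖ ^ n‖ ≤ C ^ n := fun x ↦ by
    rw [norm_pow, norm_norm]
    exact pow_le_pow_left₀ (norm_nonneg _) (f_bound x) n
  have : Integrable (fun x ↦ ‖x‖ ^ k * ‖f x‖ * ‖f x‖ ^ n) μ :=
    (f.integrable_pow_mul μ k).mul_bdd
      (f.continuous.norm.pow n).aestronglyMeasurable (.of_forall pow_bound)
  simpa only [mul_assoc, ← pow_succ'] using this

lemma integrable_norm_sq (μ : Measure E) [μ.HasTemperateGrowth] (f : 𝓢(E, F)) :
    Integrable (fun x ↦ ‖f x‖ ^ 2) μ := by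
  simpa using integrable_norm_pow_mul_norm_pow_succ μ f 0 1

lemma integrable_norm_mul_norm_sq (μ : Measure E) [μ.HasTemperateGrowth] (f : 𝓢(E, F)) :
    Integrable (fun x ↦ ‖x‖ * ‖f x‖ ^ 2) μ := by
  simpa using integrable_norm_pow_mul_norm_pow_succ μ f 1 1

lemma norm_mul_integral_norm_sq_le (μ : Measure E) [μ.HasTemperateGrowth]
    [μ.IsAddRightInvariant] (f : 𝓢(E, F)) (a : E) :
    ‖a‖ * ∫ x, ‖f x‖ ^ 2 ∂μ ≤
      ‖a‖ * (∫ x, ‖f (x - a) - f x‖ ^ 2 ∂μ) + 3 * ∫ x, ‖x‖ * ‖f x‖ ^ 2 ∂μ := by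
  have mass := integrable_norm_sq μ f
  have moment := integrable_norm_mul_norm_sq μ f
  have mass_add : Integrable (fun x ↦ ‖f (x - a)‖ ^ 2 + ‖f x‖ ^ 2) μ :=
    (mass.comp_sub_right a).add mass
  have moment_add : Integrable (fun x ↦ ‖x - a‖ * ‖f (x - a)‖ ^ 2 + ‖x‖ * ‖f x‖ ^ 2) μ :=
    (moment.comp_sub_right a).add moment
  have diff : Integrable (fun x ↦ ‖f (x - a) - f x‖ ^ 2) μ :=
    integrable_norm_sq μ (f.compSubConstCLM ℝ a - f)
  have pointwise (x : E) : ‖a‖ * (‖f (x - a)‖ ^ 2 + ‖f x‖ ^ 2) ≤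
      2 * ‖a‖ * ‖f (x - a) - f x‖ ^ 2 + 3 * (‖x - a‖ * ‖f (x - a)‖ ^ 2 + ‖x‖ * ‖f x‖ ^ 2) := by
    refine mul_norm_sq_add_norm_sq_le _ _ (norm_nonneg _) (norm_nonneg _) (norm_nonneg _) ?_
    rw [norm_sub_rev]
    exact norm_le_norm_sub_add a x
  have integrated := integral_mono (mass_add.const_mul ‖a‖)
    ((diff.const_mul (2 * ‖a‖)).add (moment_add.const_mul 3)) pointwise
  rw [integral_add' (diff.const_mul _) (moment_add.const_mul 3), integral_const_mul,
    integral_const_mul, integral_const_mul, integral_comp_sub_add_self mass,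
    integral_comp_sub_add_self moment, smul_eq_mul, smul_eq_mul] at integrated
  linarith

end Schwartz

section Fourier

variable {V : Type*} [NormedAddCommGroup V] [InnerProductSpace ℝ V] [FiniteDimensional ℝ V]
  [MeasurableSpace V] [BorelSpace V]

lemma fourier_compSubConstCLM_apply {F : Type*} [NormedAddCommGroup F] [NormedSpace ℂ F]
    (f : 𝓢(V, F)) (a ξ : V) :
    𝓕 (f.compSubConstCLM ℂ a) ξ = Real.fourierChar (-⟪a, ξ⟫) • 𝓕 f ξ := by
  have phase : 𝓕 (fun x ↦ f (x + -a)) ξ = Real.fourierChar ⟪-a, ξ⟫ • 𝓕 f ξ :=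
    congrFun (VectorFourier.fourierIntegral_comp_add_right
      Real.fourierChar volume (innerₗ V) f (-a)) ξ
  simp only [← sub_eq_add_neg, inner_neg_left] at phase
  exact phase

variable {H : Type*} [NormedAddCommGroup H] [InnerProductSpace ℂ H] [CompleteSpace H]

lemma integral_norm_comp_sub_sub_sq_le (f : 𝓢(V, H)) (a : V) :
    ∫ x, ‖f (x - a) - f x‖ ^ 2 ≤ 4 * Real.pi * ‖a‖ * ∫ ξ, ‖ξ‖ * ‖𝓕 f ξ‖ ^ 2 := by
  set g : 𝓢(V, H) := f.compSubConstCLM ℂ a - f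
  have fourier_g (ξ : V) : 𝓕 g ξ = ((Real.fourierChar (-⟪a, ξ⟫) : ℂ) - 1) • 𝓕 f ξ := by
    have fourier_sub : 𝓕 g = 𝓕 (f.compSubConstCLM ℂ a) - 𝓕 f :=
      map_sub (FourierTransform.fourierCLM ℂ 𝓢(V, H)) _ _
    rw [fourier_sub, sub_apply, fourier_compSubConstCLM_apply, Circle.smul_def, sub_smul, one_smul]
  have pointwise (ξ : V) : ‖𝓕 g ξ‖ ^ 2 ≤ 4 * Real.pi * ‖a‖ * (‖ξ‖ * ‖𝓕 f ξ‖ ^ 2) :=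
    calc ‖𝓕 g ξ‖ ^ 2
        = ‖(Real.fourierChar (-⟪a, ξ⟫) : ℂ) - 1‖ ^ 2 * ‖𝓕 f ξ‖ ^ 2 := by
          rw [fourier_g, norm_smul, mul_pow]
      _ ≤ 4 * Real.pi * |⟪a, ξ⟫| * ‖𝓕 f ξ‖ ^ 2 := by
          gcongr
          simpa only [abs_neg] using norm_fourierChar_sub_one_sq_le (-⟪a, ξ⟫)
      _ ≤ 4 * Real.pi * (‖a‖ * ‖ξ‖) * ‖𝓕 f ξ‖ ^ 2 := by
          gcongr
          exact abs_real_inner_le_norm a ξ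
      _ = 4 * Real.pi * ‖a‖ * (‖ξ‖ * ‖𝓕 f ξ‖ ^ 2) := by ring
  calc ∫ x, ‖f (x - a) - f x‖ ^ 2
      = ∫ ξ, ‖𝓕 g ξ‖ ^ 2 := (integral_norm_sq_fourier g).symm
    _ ≤ ∫ ξ, 4 * Real.pi * ‖a‖ * (‖ξ‖ * ‖𝓕 f ξ‖ ^ 2) :=
        integral_mono (integrable_norm_sq volume (𝓕 g))
          ((integrable_norm_mul_norm_sq volume (𝓕 f)).const_mul _) pointwise
    _ = 4 * Real.pi * ‖a‖ * ∫ ξ, ‖ξ‖ * ‖𝓕 f ξ‖ ^ 2 := integral_const_mul _ _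

theorem abs_moment_uncertainty_general [Nontrivial V] (f : 𝓢(V, H)) :
    (∫ x, ‖f x‖ ^ 2) ^ 2 ≤
      48 * Real.pi * ((∫ x, ‖x‖ * ‖f x‖ ^ 2) * ∫ ξ, ‖ξ‖ * ‖𝓕 f ξ‖ ^ 2) := by
  set M := ∫ x, ‖f x‖ ^ 2
  set A := ∫ x, ‖x‖ * ‖f x‖ ^ 2
  set B := ∫ ξ, ‖ξ‖ * ‖𝓕 f ξ‖ ^ 2
  have quadratic (t : ℝ) : 0 ≤ 4 * Real.pi * B * (t * t) + -M * t + 3 * A := by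
    obtain ⟨a, ha⟩ := exists_norm_eq V (abs_nonneg t)
    have : t * M ≤ 4 * Real.pi * B * (t * t) + 3 * A :=
      calc t * M
          ≤ ‖a‖ * M := mul_le_mul_of_nonneg_right (ha ▸ le_abs_self t)
            (integral_nonneg fun _ ↦ sq_nonneg _)
        _ ≤ ‖a‖ * (∫ x, ‖f (x - a) - f x‖ ^ 2) + 3 * A := norm_mul_integral_norm_sq_le volume f a
        _ ≤ ‖a‖ * (4 * Real.pi * ‖a‖ * B) + 3 * A := by
          gcongr
          exact integral_norm_comp_sub_sub_sq_le f a
        _ = 4 * Real.pi * B * (t * t) + 3 * A := by rw [← abs_mul_abs_self t, ha]; ring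
    linarith
  have discriminant : (-M) ^ 2 - 4 * (4 * Real.pi * B) * (3 * A) ≤ 0 := discrim_le_zero quadratic
  linarith

end Fourier

/-- There is a constant `C > 0` such that every normalized Schwartz function
`ψ : ℝ → ℂ` satisfies `(∫|x||ψ(x)|²dx)·(∫|ξ||ψ̂(ξ)|²dξ) ≥ C`. -/
theorem abs_moment_uncertainty :
    ∃ C : ℝ, 0 < C ∧ ∀ ψ : SchwartzMap ℝ ℂ, (∫ x : ℝ, ‖ψ x‖ ^ 2) = 1 →
      C ≤ (∫ x : ℝ, |x| * ‖ψ x‖ ^ 2) * ∫ ξ : ℝ, |ξ| * ‖𝓕 (⇑ψ) ξ‖ ^ 2 := by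
  refine ⟨1 / (48 * Real.pi), by positivity, fun ψ hψ ↦ ?_⟩
  rw [div_le_iff₀' (by positivity)]
  simpa [hψ, fourier_coe] using abs_moment_uncertainty_general ψ
end

section
/- The infimum over normalized Schwartz functions ψ : ℝ → ℂ of the product (∫_ℝ |x| |ψ(x)|² dx) · (∫_ℝ |ξ| |ψ̂(ξ)|² dξ) equals one quarter of the square of the infimum over normalized Schwartz functions ψ of the sum ∫_ℝ |x| |ψ(x)|² dx + ∫_ℝ |ξ| |ψ̂(ξ)|² dξ. (This is the relation C = E₀²/4 between the optimal uncertainty product C and the lowest expectation E₀ of the operator |Q| + |P|, obtained by combining the arithmetic–geometric mean inequality with the dilation symmetry ψ(x) ↦ λ^{1/2}ψ(λx).) -/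
open MeasureTheory SchwartzMap
open scoped FourierTransform

open Module (finrank)

/-! Write `A` and `B` for the moments of `ψ` and of its Fourier transform. The `L²`-normalized
dilation of `ψ` by `l` has as Fourier transform the dilation of `𝓕 ψ` by `l⁻¹`, so the set of
attainable pairs `(A, B)` is stable under `(A, B) ↦ (t⁻¹ * A, t * B)` for all `t > 0`. Such a
substitution preserves `A * B`, while the infimum over `t` of `t⁻¹ * A + t * B` is
`2 * √(A * B)`. -/

section Infimum

lemma sInf_setOf_exists_and_eq {α ι : Type*} [InfSet α] (P : ι → Prop) (f : ι → α) :
    sInf {y | ∃ i, P i ∧ y = f i} = ⨅ i : {i // P i}, f i := by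
  simp only [iInf, Set.range, Subtype.exists, exists_prop, eq_comm]

lemma sq_le_four_mul_of_forall_le_inv_mul_add_mul {m a b : ℝ} (hm : 0 ≤ m) (ha : 0 ≤ a)
    (hb : 0 ≤ b) (h : ∀ t > 0, m ≤ t⁻¹ * a + t * b) : m ^ 2 ≤ 4 * (a * b) := by
  have quadratic_nonneg (t : ℝ) : 0 ≤ b * (t * t) + -m * t + a := by
    obtain ht | ht := le_or_gt t 0
    · nlinarith [mul_nonneg hb (mul_self_nonneg t), mul_nonneg hm (neg_nonneg.2 ht)]
    · calc
        0 ≤ t * (t⁻¹ * a + t * b - m) := mul_nonneg ht.le (sub_nonneg.2 (h t ht))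
        _ = b * (t * t) + -m * t + a := by field_simp; ring
  have discrim_nonpos : (-m) ^ 2 - 4 * b * a ≤ 0 := discrim_le_zero quadratic_nonneg
  linarith

variable {ι : Sort*} [Nonempty ι] {a b : ι → ℝ}

lemma four_mul_iInf_mul_le_iInf_add_sq (ha : ∀ i, 0 ≤ a i) (hb : ∀ i, 0 ≤ b i) :
    4 * ⨅ i, a i * b i ≤ (⨅ i, (a i + b i)) ^ 2 := by
  have bdd : BddBelow (Set.range fun i ↦ a i * b i) :=
    ⟨0, Set.forall_mem_range.2 fun i ↦ mul_nonneg (ha i) (hb i)⟩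
  have sqrt_le : √(4 * ⨅ i, a i * b i) ≤ ⨅ i, (a i + b i) := le_ciInf fun i ↦
    Real.sqrt_le_iff.2 ⟨add_nonneg (ha i) (hb i), calc
      4 * ⨅ i, a i * b i ≤ 4 * (a i * b i) := by gcongr; exact ciInf_le bdd i
      _ = 4 * a i * b i := by ring
      _ ≤ (a i + b i) ^ 2 := four_mul_le_sq_add ..⟩
  exact (Real.sqrt_le_iff.1 sqrt_le).2

lemma iInf_add_sq_le_four_mul_iInf_mul (ha : ∀ i, 0 ≤ a i) (hb : ∀ i, 0 ≤ b i)
    (h : ∀ i, ∀ t > 0, ∃ j, a j = t⁻¹ * a i ∧ b j = t * b i) :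
    (⨅ i, (a i + b i)) ^ 2 ≤ 4 * ⨅ i, a i * b i := by
  have hab (i : ι) : 0 ≤ a i + b i := add_nonneg (ha i) (hb i)
  have bdd : BddBelow (Set.range fun i ↦ a i + b i) := ⟨0, Set.forall_mem_range.2 hab⟩
  rw [← div_le_iff₀' four_pos]
  refine le_ciInf fun i ↦ (div_le_iff₀' four_pos).2 ?_
  refine sq_le_four_mul_of_forall_le_inv_mul_add_mul (Real.iInf_nonneg hab) (ha i) (hb i)
    fun t ht ↦ ?_
  obtain ⟨j, haj, hbj⟩ := h i t ht
  exact haj ▸ hbj ▸ ciInf_le bdd j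

lemma iInf_mul_eq_iInf_add_sq_div_four (ha : ∀ i, 0 ≤ a i) (hb : ∀ i, 0 ≤ b i)
    (h : ∀ i, ∀ t > 0, ∃ j, a j = t⁻¹ * a i ∧ b j = t * b i) :
    ⨅ i, a i * b i = (⨅ i, (a i + b i)) ^ 2 / 4 := by
  rw [eq_div_iff four_ne_zero, mul_comm]
  exact (four_mul_iInf_mul_le_iInf_add_sq ha hb).antisymm
    (iInf_add_sq_le_four_mul_iInf_mul ha hb h)

end Infimum

section AbsMoment

variable {E F : Type*} [NormedAddCommGroup E] [MeasurableSpace E] [NormedAddCommGroup F]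

/-- The absolute moment of order `p` of the density `‖f‖ ^ 2`, that is, the mean of `‖x‖ ^ p` in
the state `f`. Since `0 ^ 0 = 1`, the moment of order `0` is the squared `L²` norm. -/
noncomputable def absMoment (p : ℝ) (f : E → F) (μ : Measure E := by volume_tac) : ℝ :=
  ∫ x, ‖x‖ ^ p * ‖f x‖ ^ 2 ∂μ

lemma absMoment_nonneg (p : ℝ) (f : E → F) (μ : Measure E) : 0 ≤ absMoment p f μ :=
  integral_nonneg fun _ ↦ by positivity

lemma absMoment_zero (f : E → F) (μ : Measure E) : absMoment 0 f μ = ∫ x, ‖f x‖ ^ 2 ∂μ := by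
  simp only [absMoment, Real.rpow_zero, one_mul]

end AbsMoment

section Dilation

variable {E F : Type*} [NormedAddCommGroup E] [NormedSpace ℝ E] [NormedAddCommGroup F]
  [NormedSpace ℝ F]

/-- The unitary dilation `ψ ↦ |l| ^ (d / 2) ψ(l x)` of Schwartz functions, `d = dim E`, which
rescales position and momentum inversely to each other. The scale is a unit of `ℝ`, so that the
inverse dilation is the one by `l⁻¹`. -/
noncomputable def unitaryDilation (l : ℝˣ) (ψ : 𝓢(E, F)) : 𝓢(E, F) :=
  |(l : ℝ)| ^ (finrank ℝ E / 2 : ℝ) •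
    compCLMOfContinuousLinearEquiv ℝ (ContinuousLinearEquiv.smulLeft l) ψ

lemma unitaryDilation_apply (l : ℝˣ) (ψ : 𝓢(E, F)) (x : E) :
    unitaryDilation l ψ x = |(l : ℝ)| ^ (finrank ℝ E / 2 : ℝ) • ψ ((l : ℝ) • x) :=
  rfl

lemma norm_sq_unitaryDilation_apply (l : ℝˣ) (ψ : 𝓢(E, F)) (x : E) :
    ‖unitaryDilation l ψ x‖ ^ 2 = |(l : ℝ)| ^ finrank ℝ E * ‖ψ ((l : ℝ) • x)‖ ^ 2 := by
  rw [unitaryDilation_apply, norm_smul, mul_pow, Real.norm_of_nonneg (by positivity),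
    ← Real.rpow_mul_natCast (abs_nonneg _), Nat.cast_two, div_mul_cancel₀ _ two_ne_zero,
    Real.rpow_natCast]

variable [MeasurableSpace E] [BorelSpace E] [FiniteDimensional ℝ E] (μ : Measure E)
  [μ.IsAddHaarMeasure]

lemma integral_norm_rpow_smul_comp_smul (p : ℝ) {l : ℝ} (hl : l ≠ 0) (g : E → F) :
    ∫ x, ‖x‖ ^ p • g (l • x) ∂μ = (|l| ^ p * |l| ^ finrank ℝ E)⁻¹ • ∫ x, ‖x‖ ^ p • g x ∂μ := by
  have norm_rpow (x : E) : ‖x‖ ^ p = (|l| ^ p)⁻¹ * ‖l • x‖ ^ p := by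
    rw [norm_smul, Real.norm_eq_abs, Real.mul_rpow (abs_nonneg l) (norm_nonneg x),
      inv_mul_cancel_left₀ (by positivity)]
  calc
    ∫ x, ‖x‖ ^ p • g (l • x) ∂μ = ∫ x, (|l| ^ p)⁻¹ • ‖l • x‖ ^ p • g (l • x) ∂μ := by
      simp only [smul_smul, ← norm_rpow]
    _ = (|l| ^ p * |l| ^ finrank ℝ E)⁻¹ • ∫ x, ‖x‖ ^ p • g x ∂μ := by
      rw [integral_smul, Measure.integral_comp_smul μ (fun x ↦ ‖x‖ ^ p • g x), abs_inv, abs_pow,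
        smul_smul, mul_inv]

lemma absMoment_unitaryDilation (p : ℝ) (l : ℝˣ) (ψ : 𝓢(E, F)) :
    absMoment p (unitaryDilation l ψ) μ = (|(l : ℝ)| ^ p)⁻¹ * absMoment p ψ μ := by
  calc
    absMoment p (unitaryDilation l ψ) μ =
        |(l : ℝ)| ^ finrank ℝ E * ∫ x, ‖x‖ ^ p * ‖ψ ((l : ℝ) • x)‖ ^ 2 ∂μ := by
      simp only [absMoment, norm_sq_unitaryDilation_apply, mul_left_comm (‖_‖ ^ p),
        integral_const_mul]
    _ = |(l : ℝ)| ^ finrank ℝ E * ((|(l : ℝ)| ^ p * |(l : ℝ)| ^ finrank ℝ E)⁻¹ * absMoment p ψ μ) :=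
      congrArg _ (integral_norm_rpow_smul_comp_smul μ p l.ne_zero fun x ↦ ‖ψ x‖ ^ 2)
    _ = (|(l : ℝ)| ^ p)⁻¹ * absMoment p ψ μ := by field_simp

lemma integral_norm_sq_unitaryDilation (l : ℝˣ) (ψ : 𝓢(E, F)) :
    ∫ x, ‖unitaryDilation l ψ x‖ ^ 2 ∂μ = ∫ x, ‖ψ x‖ ^ 2 ∂μ := by
  simpa [absMoment_zero] using absMoment_unitaryDilation μ 0 l ψ

variable (F) in
lemma exists_schwartzMap_integral_norm_sq_eq_one [Nontrivial F] :
    ∃ ψ : 𝓢(E, F), ∫ x, ‖ψ x‖ ^ 2 ∂μ = 1 := by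
  let φ : ContDiffBump (0 : E) := default
  have sq_pos : 0 < ∫ x, φ x ^ 2 ∂μ :=
    (φ.continuous.pow 2).integral_pos_of_hasCompactSupport_nonneg_nonzero
      (φ.hasCompactSupport.comp_left (g := (· ^ 2)) (zero_pow two_ne_zero))
      (fun x ↦ sq_nonneg (φ x)) (x := 0) (by simp [φ.eventuallyEq_one.eq_of_nhds])
  obtain ⟨v, hv⟩ : ∃ v : F, ‖v‖ = (√(∫ x, φ x ^ 2 ∂μ))⁻¹ := exists_norm_eq F (by positivity)
  let ψ : 𝓢(E, F) := (φ.hasCompactSupport.smul_right (f' := fun _ ↦ v)).toSchwartzMap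
    (φ.contDiff.smul contDiff_const)
  have norm_sq (x : E) : ‖ψ x‖ ^ 2 = φ x ^ 2 * (∫ x, φ x ^ 2 ∂μ)⁻¹ := calc
    ‖ψ x‖ ^ 2 = ‖φ x • v‖ ^ 2 := rfl
    _ = φ x ^ 2 * (∫ x, φ x ^ 2 ∂μ)⁻¹ := by
      rw [norm_smul, mul_pow, hv, inv_pow, Real.sq_sqrt sq_pos.le, Real.norm_eq_abs, sq_abs]
  refine ⟨ψ, ?_⟩
  simp only [norm_sq]
  rw [integral_mul_const, mul_inv_cancel₀ sq_pos.ne']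

end Dilation

section Fourier

variable {V F : Type*} [NormedAddCommGroup V] [InnerProductSpace ℝ V] [FiniteDimensional ℝ V]
  [MeasurableSpace V] [BorelSpace V] [NormedAddCommGroup F] [NormedSpace ℂ F]

lemma fourier_comp_smul {l : ℝ} (hl : l ≠ 0) (f : V → F) (ξ : V) :
    𝓕 (fun x ↦ f (l • x)) ξ = (|l| ^ finrank ℝ V)⁻¹ • 𝓕 f (l⁻¹ • ξ) := by
  have inner_eq (x : V) : inner ℝ x ξ = inner ℝ (l • x) (l⁻¹ • ξ) := by
    rw [real_inner_smul_left, real_inner_smul_right, mul_inv_cancel_left₀ hl]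
  simp only [Real.fourier_eq, inner_eq]
  rw [Measure.integral_comp_smul volume fun x ↦ 𝐞 (-inner ℝ x (l⁻¹ • ξ)) • f x, abs_inv, abs_pow]

lemma fourier_unitaryDilation (l : ℝˣ) (ψ : 𝓢(V, F)) :
    𝓕 (unitaryDilation l ψ) = unitaryDilation l⁻¹ (𝓕 ψ) := by
  have rpow_half : |(l : ℝ)| ^ (finrank ℝ V / 2 : ℝ) * (|(l : ℝ)| ^ finrank ℝ V)⁻¹ =
      |(l : ℝ)|⁻¹ ^ (finrank ℝ V / 2 : ℝ) := by
    rw [← Real.rpow_natCast, ← Real.rpow_neg (abs_nonneg _), Real.inv_rpow (abs_nonneg _),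
      ← Real.rpow_neg (abs_nonneg _), ← Real.rpow_add (abs_pos.2 l.ne_zero)]
    ring_nf
  ext ξ
  calc
    𝓕 (unitaryDilation l ψ) ξ =
        |(l : ℝ)| ^ (finrank ℝ V / 2 : ℝ) • 𝓕 (fun x ↦ ψ ((l : ℝ) • x)) ξ := by
      rw [unitaryDilation, FourierTransform.fourier_smul]
      rfl
    _ = |(l : ℝ)|⁻¹ ^ (finrank ℝ V / 2 : ℝ) • 𝓕 (ψ : V → F) ((l : ℝ)⁻¹ • ξ) := by
      rw [fourier_comp_smul l.ne_zero, smul_smul, rpow_half]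
    _ = unitaryDilation l⁻¹ (𝓕 ψ) ξ := by
      rw [unitaryDilation_apply, Units.val_inv_eq_inv_val, abs_inv, fourier_coe]

theorem uncertainty_product_eq_quarter_sq_general [CompleteSpace F] [Nontrivial F] {p : ℝ}
    (hp : 0 < p) :
    ⨅ ψ : {ψ : 𝓢(V, F) // ∫ x, ‖ψ x‖ ^ 2 = 1},
        absMoment p ψ.1 * absMoment p (𝓕 ψ.1 : 𝓢(V, F)) =
      (⨅ ψ : {ψ : 𝓢(V, F) // ∫ x, ‖ψ x‖ ^ 2 = 1},
        (absMoment p ψ.1 + absMoment p (𝓕 ψ.1 : 𝓢(V, F)))) ^ 2 / 4 := by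
  have : Nonempty {ψ : 𝓢(V, F) // ∫ x, ‖ψ x‖ ^ 2 = 1} :=
    nonempty_subtype.2 (exists_schwartzMap_integral_norm_sq_eq_one F volume)
  refine iInf_mul_eq_iInf_add_sq_div_four (fun _ ↦ absMoment_nonneg ..)
    (fun _ ↦ absMoment_nonneg ..) fun ⟨ψ, hψ⟩ t ht ↦ ?_
  let l : ℝˣ := Units.mk0 (t ^ p⁻¹) (by positivity)
  have abs_rpow : |(l : ℝ)| ^ p = t := by
    rw [Units.val_mk0, abs_of_pos (by positivity), Real.rpow_inv_rpow ht.le hp.ne']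
  refine ⟨⟨unitaryDilation l ψ, (integral_norm_sq_unitaryDilation volume l ψ).trans hψ⟩, ?_, ?_⟩
  · rw [absMoment_unitaryDilation, abs_rpow]
  · rw [fourier_unitaryDilation, absMoment_unitaryDilation, Units.val_inv_eq_inv_val, abs_inv,
      Real.inv_rpow (abs_nonneg _), inv_inv, abs_rpow]

end Fourier

/-- The optimal uncertainty product for absolute first moments:
`inf_ψ (∫|x||ψ|²)·(∫|ξ||ψ̂|²) = (inf_ψ (∫|x||ψ|² + ∫|ξ||ψ̂|²))² / 4`,
the infima being over normalized Schwartz functions (the relation `C = E₀²/4`). -/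
theorem uncertainty_product_eq_quarter_sq :
    sInf {E : ℝ | ∃ ψ : SchwartzMap ℝ ℂ, (∫ x : ℝ, ‖ψ x‖ ^ 2) = 1 ∧
        E = (∫ x : ℝ, |x| * ‖ψ x‖ ^ 2) * ∫ ξ : ℝ, |ξ| * ‖𝓕 (⇑ψ) ξ‖ ^ 2}
      = (sInf {E : ℝ | ∃ ψ : SchwartzMap ℝ ℂ, (∫ x : ℝ, ‖ψ x‖ ^ 2) = 1 ∧
          E = (∫ x : ℝ, |x| * ‖ψ x‖ ^ 2) + ∫ ξ : ℝ, |ξ| * ‖𝓕 (⇑ψ) ξ‖ ^ 2}) ^ 2 / 4 := by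
  simpa only [absMoment, Real.rpow_one, Real.norm_eq_abs, fourier_coe, sInf_setOf_exists_and_eq]
    using uncertainty_product_eq_quarter_sq_general (V := ℝ) (F := ℂ) one_pos
end
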